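/- arXiv:1508.05515 — 2 statements merged into one kernel-verified Lean document; each statement's English description precedes it below -/
import Mathlib

section
/- Every 2-connected unit disk graph G has a 2-connected spanning subgraph F in which every vertex has degree at most 5. -/
open scoped Classical
open EuclideanGeometry Real

noncomputable section

/-- Points in the Euclidean plane. -/
abbrev Pt := EuclideanSpace ℝ (Fin 2)

/-- A graph is `k`-connected if it has more than `k` vertices and remains connected
after deleting any fewer than `k` vertices. -/
def KConnected {V : Type*} [Fintype V] (k : ℕ) (G : SimpleGraph V) : Prop :=
  k < Fintype.card V ∧ ∀ S : Finset V, S.card < k → (G.induce {v : V | v ∉ S}).Connected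

/-- `G` is a unit disk graph realized by the (injective) point placement `p`:
two distinct vertices are adjacent iff their Euclidean distance is at most 1. -/
def IsUnitDiskGraph {V : Type*} (G : SimpleGraph V) (p : V → Pt) : Prop :=
  Function.Injective p ∧ ∀ u v, G.Adj u v ↔ u ≠ v ∧ dist (p u) (p v) ≤ 1

/-- Euclidean length of an edge. -/
def edgeLen {V : Type*} (p : V → Pt) : Sym2 V → ℝ :=
  Sym2.lift ⟨fun a b => dist (p a) (p b), fun a b => dist_comm (p a) (p b)⟩

/-- Total Euclidean edge length of a graph. -/
def glen {V : Type*} [Fintype V] (p : V → Pt) (G : SimpleGraph V) : ℝ :=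
  ∑ e ∈ G.edgeFinset, edgeLen p e

/-- `F` is a minimum-length `k`-connected spanning subgraph (`k`-MSS) of `G`. -/
def IsMSS {V : Type*} [Fintype V] (k : ℕ) (p : V → Pt) (G F : SimpleGraph V) : Prop :=
  F ≤ G ∧ KConnected k F ∧
    ∀ F' : SimpleGraph V, F' ≤ G → KConnected k F' → glen p F ≤ glen p F'

/-!
Weigh the edges by length, ties being broken by the first coordinates of the ends, and take a
2-connected spanning subgraph `F` of least total weight. If `u` had six neighbours in `F`, then by
planar geometry two of them, `v` and `w`, would satisfy `weight(vw) < weight(uv)`; in particular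
`vw` is an edge of `G`. Uncrossing two separations shows that either `F - uv + vw` or `F - uw` is
still 2-connected (this needs only a third neighbour of `u`), and both are lighter than `F`.
-/

section Geometry

section InnerProduct

variable {E : Type*} [NormedAddCommGroup E] [InnerProductSpace ℝ E] {x y : E}

lemma norm_sub_lt_max_of_angle_lt_pi_div_three
    (h : InnerProductGeometry.angle x y < π / 3) : ‖x - y‖ < max ‖x‖ ‖y‖ := by
  have hx : 0 < ‖x‖ := norm_pos_iff.2 <| by
    rintro rfl
    linarith [InnerProductGeometry.angle_zero_left y, pi_pos]
  have hy : 0 < ‖y‖ := norm_pos_iff.2 <| by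
    rintro rfl
    linarith [InnerProductGeometry.angle_zero_right x, pi_pos]
  have hcos : 1 / 2 < cos (InnerProductGeometry.angle x y) := by
    rw [← cos_pi_div_three]
    exact cos_lt_cos_of_nonneg_of_le_pi (InnerProductGeometry.angle_nonneg x y)
      (by linarith [pi_pos]) h
  have hsq : ‖x - y‖ ^ 2 < ‖x‖ ^ 2 + ‖y‖ ^ 2 - ‖x‖ * ‖y‖ := by
    rw [norm_sub_sq_real, ← InnerProductGeometry.cos_angle_mul_norm_mul_norm]
    nlinarith [mul_pos hx hy]
  rw [lt_max_iff]
  rcases le_total ‖x‖ ‖y‖ with hxy | hyx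
  · exact Or.inr (lt_of_pow_lt_pow_left₀ 2 hy.le (by nlinarith))
  · exact Or.inl (lt_of_pow_lt_pow_left₀ 2 hx.le (by nlinarith))

lemma pi_div_three_lt_angle_of_norm_lt_norm_sub (hx : ‖x‖ < ‖x - y‖) (hy : ‖y‖ ≤ ‖x - y‖) :
    π / 3 < InnerProductGeometry.angle x y := by
  rcases eq_or_ne x 0 with rfl | hx₀
  · linarith [InnerProductGeometry.angle_zero_left y, pi_pos]
  by_contra! h
  have hcos : 1 / 2 ≤ cos (InnerProductGeometry.angle x y) := by
    rw [← cos_pi_div_three]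
    exact cos_le_cos_of_nonneg_of_le_pi (InnerProductGeometry.angle_nonneg x y)
      (by linarith [pi_pos]) h
  have hsq : ‖x - y‖ ^ 2 ≤ ‖x‖ ^ 2 + ‖y‖ ^ 2 - ‖x‖ * ‖y‖ := by
    rw [norm_sub_sq_real, ← InnerProductGeometry.cos_angle_mul_norm_mul_norm]
    nlinarith [mul_nonneg (norm_nonneg x) (norm_nonneg y)]
  have hx₀' : 0 < ‖x‖ := norm_pos_iff.2 hx₀
  rcases le_or_gt ‖y‖ ‖x‖ with hyx | hxy
  · nlinarith [norm_nonneg y]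
  · nlinarith

end InnerProduct

lemma angle_eq_abs_arg_sub_arg {x y : ℂ} (hx : x ≠ 0) (hy : y ≠ 0)
    (h : |x.arg - y.arg| < π) : InnerProductGeometry.angle x y = |x.arg - y.arg| := by
  rw [Complex.angle_eq_abs_arg hx hy, ← Complex.arg_coe_angle_toReal_eq_arg,
    Complex.arg_div_coe_angle hx hy, ← Real.Angle.coe_sub,
    Real.Angle.toReal_coe_eq_self_iff.2 ⟨(abs_lt.1 h).1, (abs_lt.1 h).2.le⟩]

lemma exists_ne_angle_lt_of_card_lt {N : Finset ℂ} {n : ℕ} {θ : ℝ} {c : ℂ} (hn : n < N.card)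
    (hθ₀ : 0 < θ) (hθ : θ ≤ π) (hN : ∀ z ∈ N, z ≠ 0) (hc : c ≠ 0)
    (hcone : ∀ z ∈ N, InnerProductGeometry.angle z c < n * θ / 2) :
    ∃ z ∈ N, ∃ w ∈ N, z ≠ w ∧ InnerProductGeometry.angle z w < θ := by
  have hsector : ∀ z ∈ N, ⌊(z / c).arg / θ + n / 2⌋ ∈ Finset.Ico (0 : ℤ) n := by
    intro z hz
    have habs : |(z / c).arg / θ| < n / 2 := by
      rw [abs_div, abs_of_pos hθ₀, div_lt_iff₀ hθ₀, ← Complex.angle_eq_abs_arg (hN z hz) hc]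
      exact (hcone z hz).trans_eq (by ring)
    rw [abs_lt] at habs
    rw [Finset.mem_Ico, Int.floor_nonneg, Int.floor_lt, Int.cast_natCast]
    constructor <;> linarith
  obtain ⟨z, hz, w, hw, hzw, hfloor⟩ :=
    Finset.exists_ne_map_eq_of_card_lt_of_maps_to (by simpa using hn) hsector
  have harg : |(z / c).arg - (w / c).arg| < θ := by
    have h := Int.abs_sub_lt_one_of_floor_eq_floor hfloor
    rwa [add_sub_add_right_eq_sub, ← sub_div, abs_div, abs_of_pos hθ₀, div_lt_one hθ₀] at h
  refine ⟨z, hz, w, hw, hzw, ?_⟩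
  rwa [← Complex.angle_mul_right (inv_ne_zero hc), ← div_eq_mul_inv, ← div_eq_mul_inv,
    angle_eq_abs_arg_sub_arg (div_ne_zero (hN z hz) hc) (div_ne_zero (hN w hw) hc)
      (harg.trans_le hθ)]

lemma exists_norm_sub_lt_of_angle_lt_two_pi_div_three {N : Finset ℂ} {c : ℂ} (hcard : 4 < N.card)
    (hN : ∀ z ∈ N, z ≠ 0) (hc : c ≠ 0)
    (hcone : ∀ z ∈ N, InnerProductGeometry.angle z c < 2 * π / 3) :
    ∃ z ∈ N, ∃ w ∈ N, z ≠ w ∧ ‖z - w‖ < ‖z‖ := by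
  obtain ⟨z, hz, w, hw, hzw, hangle⟩ := exists_ne_angle_lt_of_card_lt (θ := π / 3) hcard
    (by positivity) (by linarith [pi_pos]) hN hc fun z hz => (hcone z hz).trans_eq (by ring)
  rcases lt_max_iff.1 (norm_sub_lt_max_of_angle_lt_pi_div_three hangle) with h | h
  · exact ⟨z, hz, w, hw, hzw, h⟩
  · exact ⟨w, hw, z, hz, hzw.symm, norm_sub_rev z w ▸ h⟩

-- If `Re w < 0`, failure at all pairs `(v, w)` puts the other five points in the open cone of
-- opening `4π/3` about `-w`; if there is no such `w`, all six lie in a half-plane.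
lemma exists_norm_sub_lt_or_eq_of_five_lt_card {N : Finset ℂ} (hcard : 5 < N.card)
    (hN : ∀ z ∈ N, z ≠ 0) :
    ∃ v ∈ N, ∃ w ∈ N, v ≠ w ∧ (‖v - w‖ < ‖v‖ ∨ ‖v - w‖ = ‖v‖ ∧ w.re < 0) := by
  by_cases hre : ∃ w ∈ N, w.re < 0
  · obtain ⟨w, hw, hre⟩ := hre
    by_contra! hfar
    have hcone : ∀ v ∈ N.erase w, InnerProductGeometry.angle v (-w) < 2 * π / 3 := by
      intro v hv
      obtain ⟨hvw, hv⟩ := Finset.mem_erase.1 hv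
      obtain ⟨hle, hne⟩ := hfar v hv w hw hvw
      have hlt : ‖v‖ < ‖v - w‖ := hle.lt_of_ne fun h => (hne h.symm).not_gt hre
      have hle' : ‖w‖ ≤ ‖v - w‖ := norm_sub_rev w v ▸ (hfar w hw v hv hvw.symm).1
      rw [InnerProductGeometry.angle_neg_right]
      linarith [pi_div_three_lt_angle_of_norm_lt_norm_sub hlt hle']
    obtain ⟨a, ha, b, hb, hab, hlt⟩ := exists_norm_sub_lt_of_angle_lt_two_pi_div_three
      (by rw [Finset.card_erase_of_mem hw]; lia) (fun z hz => hN z (Finset.mem_of_mem_erase hz))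
      (neg_ne_zero.2 (hN w hw)) hcone
    exact (hfar a (Finset.mem_of_mem_erase ha) b (Finset.mem_of_mem_erase hb) hab).1.not_gt hlt
  · push Not at hre
    have hcone : ∀ z ∈ N, InnerProductGeometry.angle z 1 < 2 * π / 3 := by
      intro z hz
      rw [Complex.angle_one_right (hN z hz)]
      linarith [Complex.abs_arg_le_pi_div_two_iff.2 (hre z hz), pi_pos]
    obtain ⟨a, ha, b, hb, hab, hlt⟩ := exists_norm_sub_lt_of_angle_lt_two_pi_div_three
      (by lia) hN one_ne_zero hcone
    exact ⟨a, ha, b, hb, hab, Or.inl hlt⟩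

lemma exists_dist_lt_or_eq_of_five_lt_card {N : Finset Pt} {x : Pt} (hcard : 5 < N.card)
    (hx : x ∉ N) :
    ∃ v ∈ N, ∃ w ∈ N, v ≠ w ∧ (dist v w < dist x v ∨ dist v w = dist x v ∧ w 0 < x 0) := by
  let toComplex : Pt ≃ₗᵢ[ℝ] ℂ := Complex.orthonormalBasisOneI.repr.symm
  let f : Pt → ℂ := fun y => toComplex (y - x)
  have hf : Function.Injective f := toComplex.injective.comp sub_left_injective
  have hnorm : ∀ y, ‖f y‖ = dist x y := fun y => by
    rw [toComplex.norm_map, dist_comm, dist_eq_norm]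
  have hsub : ∀ y z, ‖f y - f z‖ = dist y z := fun y z => by
    rw [← map_sub, toComplex.norm_map, sub_sub_sub_cancel_right, dist_eq_norm]
  have hre : ∀ y, (f y).re = y 0 - x 0 := fun y => by simp [f, toComplex]
  have h₀ : ∀ z ∈ N.image f, z ≠ 0 := by
    rintro _ hz rfl
    obtain ⟨y, hy, hy₀⟩ := Finset.mem_image.1 hz
    rw [← norm_eq_zero, hnorm, dist_eq_zero] at hy₀
    exact hx (hy₀ ▸ hy)
  have hmain := exists_norm_sub_lt_or_eq_of_five_lt_card
    (by rwa [Finset.card_image_of_injective N hf]) h₀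
  simpa only [Finset.exists_mem_image, hf.ne_iff, hnorm, hsub, hre, sub_neg] using hmain

end Geometry

section Separation

variable {V : Type*}

/-- `(x, S)` is a separation of `F`: after deleting the vertex `x`, no edge joins the nonempty
set `S` to the nonempty rest of the graph. A graph with at least three vertices is 2-connected
iff it has no separation, see `kConnected_two_iff_forall_not_isSeparation`. -/
structure IsSeparation (F : SimpleGraph V) (x : V) (S : Set V) : Prop where
  notMem : x ∉ S
  nonempty : S.Nonempty
  exists_notMem : ∃ b ∉ S, b ≠ x
  eq_of_adj : ∀ ⦃a b⦄, a ∈ S → b ∉ S → F.Adj a b → b = x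

variable {F H : SimpleGraph V} {x u v w t : V} {S T : Set V}

lemma IsSeparation.anti (hle : H ≤ F) (hS : IsSeparation F x S) : IsSeparation H x S where
  __ := hS
  eq_of_adj _ _ ha hb hab := hS.eq_of_adj ha hb (hle hab)

lemma IsSeparation.compl_insert (hS : IsSeparation F x S) : IsSeparation F x (insert x S)ᶜ where
  notMem hx := hx (Set.mem_insert x S)
  nonempty := hS.exists_notMem.imp fun b ⟨hb, hbx⟩ => by simp [hb, hbx]
  exists_notMem := hS.nonempty.imp fun a ha =>
    ⟨fun h => h (Set.mem_insert_of_mem x ha), ne_of_mem_of_not_mem ha hS.notMem⟩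
  eq_of_adj a b ha hb hab := by
    rw [Set.mem_compl_iff, Set.mem_insert_iff, not_or] at ha
    rw [Set.notMem_compl_iff, Set.mem_insert_iff] at hb
    exact hb.resolve_right fun hbS => ha.1 (hS.eq_of_adj hbS ha.2 hab.symm)

lemma preconnected_induce_compl_singleton_iff :
    (F.induce {x}ᶜ).Preconnected ↔ ∀ S, ¬ IsSeparation F x S := by
  constructor
  · rintro hconn S hS
    obtain ⟨a, ha⟩ := hS.nonempty
    obtain ⟨b, hb, hbx⟩ := hS.exists_notMem
    obtain ⟨walk⟩ := hconn ⟨a, ne_of_mem_of_not_mem ha hS.notMem⟩ ⟨b, hbx⟩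
    obtain ⟨d, -, hd₁, hd₂⟩ := walk.exists_boundary_dart (Subtype.val ⁻¹' S) ha hb
    exact d.snd.2 (hS.eq_of_adj hd₁ hd₂ d.adj)
  · rintro hsep a b
    by_contra hab
    refine hsep (Subtype.val '' {y | (F.induce {x}ᶜ).Reachable a y}) ⟨?_, ?_, ?_, ?_⟩
    · rintro ⟨y, -, hy⟩
      exact y.2 hy
    · exact ⟨a, a, SimpleGraph.Reachable.refl a, rfl⟩
    · refine ⟨b, ?_, b.2⟩
      rintro ⟨y, hy, hyb⟩
      exact hab (Subtype.ext hyb ▸ hy)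
    · rintro _ d ⟨c, hc, rfl⟩ hd hcd
      by_contra hdx
      have hcd' : (F.induce {x}ᶜ).Adj c ⟨d, hdx⟩ := hcd
      exact hd ⟨⟨d, hdx⟩, SimpleGraph.Reachable.trans hc hcd'.reachable, rfl⟩

lemma kConnected_two_iff_forall_preconnected [Fintype V] :
    KConnected 2 F ↔ 2 < Fintype.card V ∧ ∀ x, (F.induce {x}ᶜ).Preconnected := by
  refine and_congr_right fun hV => ⟨fun h x => ?_, fun h X hX => ?_⟩
  · have hx : {v : V | v ∉ ({x} : Finset V)} = {x}ᶜ := by ext; simp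
    exact hx ▸ (h {x} (by simp)).preconnected
  · have exists_notMem {s : Finset V} (hs : s.card ≤ 2) : ∃ x, x ∉ s := by
      simpa using Finset.exists_mem_notMem_of_card_lt_card (hs.trans_lt hV)
    have : Nonempty {v : V | v ∉ X} := nonempty_subtype.2 (exists_notMem hX.le)
    refine ⟨fun a b => ?_⟩
    obtain ⟨x, hXx, hax, hbx⟩ : ∃ x, X ⊆ {x} ∧ a.1 ≠ x ∧ b.1 ≠ x := by
      rcases X.eq_empty_or_nonempty with rfl | ⟨x, hx⟩
      · obtain ⟨x, hx⟩ := exists_notMem (Finset.card_le_two (a := a.1) (b := b.1))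
        rw [Finset.mem_insert, Finset.mem_singleton, not_or] at hx
        exact ⟨x, Finset.empty_subset _, Ne.symm hx.1, Ne.symm hx.2⟩
      · exact ⟨x, fun z hz => Finset.mem_singleton.2 (Finset.card_le_one.1 (by lia) z hz x hx),
          (ne_of_mem_of_not_mem hx a.2).symm, (ne_of_mem_of_not_mem hx b.2).symm⟩
    have hsub : ({x}ᶜ : Set V) ⊆ {v | v ∉ X} := fun z hz hzX =>
      hz (Finset.mem_singleton.1 (hXx hzX))
    exact (h x ⟨a, hax⟩ ⟨b, hbx⟩).map (SimpleGraph.induceHomOfLE F hsub).toHom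

lemma kConnected_two_iff_forall_not_isSeparation [Fintype V] :
    KConnected 2 F ↔ 2 < Fintype.card V ∧ ∀ x S, ¬ IsSeparation F x S := by
  simp only [kConnected_two_iff_forall_preconnected, preconnected_induce_compl_singleton_iff]

lemma exists_isSeparation_of_deleteEdges_le (hF : ∀ x S, ¬ IsSeparation F x S)
    (hle : F.deleteEdges {s(u, v)} ≤ H) (hS : IsSeparation H x S) :
    ∃ T, IsSeparation H x T ∧ u ∈ T ∧ v ∉ T ∧ v ≠ x := by
  obtain ⟨a, b, ha, hb, hab, hbx⟩ : ∃ a b, a ∈ S ∧ b ∉ S ∧ F.Adj a b ∧ b ≠ x := by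
    by_contra! h
    exact hF x S { hS with eq_of_adj := fun a b ha hb hab => h a b ha hb hab }
  have huv : s(a, b) = s(u, v) := by
    by_contra h
    exact hbx (hS.eq_of_adj ha hb (hle (by simp [hab, h])))
  rcases Sym2.eq_iff.1 huv with ⟨rfl, rfl⟩ | ⟨rfl, rfl⟩
  · exact ⟨S, hS, ha, hb, hbx⟩
  · exact ⟨(insert x S)ᶜ, hS.compl_insert, by simp [hb, hbx], by simp [ha],
      ne_of_mem_of_not_mem ha hS.notMem⟩

lemma IsSeparation.eq_and_eq_of_adj {a b : V} (hS : IsSeparation (F.deleteEdges {s(u, v)}) x S)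
    (hv : v ∉ S) (ha : a ∈ S) (hb : b ∉ S) (hbx : b ≠ x) (hab : F.Adj a b) : a = u ∧ b = v := by
  have huv : s(a, b) = s(u, v) := by
    by_contra h
    exact hbx (hS.eq_of_adj ha hb (by simp [hab, h]))
  rcases Sym2.eq_iff.1 huv with h | ⟨rfl, -⟩
  · exact h
  · exact absurd ha hv

-- Uncrossing: `u` separates one of the corners `T \ (S ∪ {w})` and `(S ∩ T) \ {u}` from `w`.
lemma exists_isSeparation_of_isSeparation_deleteEdges
    (huv : F.Adj u v) (hut : F.Adj u t) (huw : u ≠ w) (hvw : v ≠ w) (htv : t ≠ v) (htw : t ≠ w)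
    (hS : IsSeparation (F.deleteEdges {s(u, v)}) w S) (huS : u ∈ S) (hvS : v ∉ S)
    (hT : IsSeparation (F.deleteEdges {s(u, w)}) x T) (huT : u ∈ T) (hwT : w ∉ T) (hwx : w ≠ x) :
    ∃ A, IsSeparation F u A := by
  by_cases hxS : x ∈ S
  · have hvT : v ∈ T := by
      by_contra hvT
      exact hvw (hT.eq_and_eq_of_adj hwT huT hvT (ne_of_mem_of_not_mem hxS hvS).symm huv).2
    refine ⟨T \ insert w S, by simp [huS], ⟨v, by simp [hvT, hvS, hvw]⟩,
      ⟨w, by simp, huw.symm⟩, fun a b ⟨haT, haS⟩ hb hab => ?_⟩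
    rw [Set.mem_insert_iff, not_or] at haS
    by_contra hbu
    have hbS : b ∉ S := fun hbS =>
      hbu (hS.eq_and_eq_of_adj hvS hbS haS.2 haS.1 hab.symm).1
    have hbT : b ∉ T := fun hbT =>
      hb ⟨hbT, by simp [hbS, ne_of_mem_of_not_mem hbT hwT]⟩
    have hau := (hT.eq_and_eq_of_adj hwT haT hbT (ne_of_mem_of_not_mem hxS hbS).symm hab).1
    exact haS.2 (hau ▸ huS)
  · have htS : t ∈ S := by
      by_contra htS
      exact htv (hS.eq_and_eq_of_adj hvS huS htS htw hut).2
    have htT : t ∈ T := by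
      by_contra htT
      exact htw (hT.eq_and_eq_of_adj hwT huT htT (ne_of_mem_of_not_mem htS hxS) hut).2
    refine ⟨(S ∩ T) \ {u}, by simp, ⟨t, by simp [htS, htT, hut.ne']⟩,
      ⟨w, by simp [hwT], huw.symm⟩, fun a b ⟨⟨haS, haT⟩, hau⟩ hb hab => ?_⟩
    by_contra hbu
    by_cases hbw : b = w
    · subst hbw
      exact hau (hT.eq_and_eq_of_adj hwT haT hwT hwx hab).1
    by_cases hbS : b ∈ S
    · have hbT : b ∉ T := fun hbT => hb ⟨⟨hbS, hbT⟩, hbu⟩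
      exact hau (hT.eq_and_eq_of_adj hwT haT hbT (ne_of_mem_of_not_mem hbS hxS) hab).1
    · exact hau (hS.eq_and_eq_of_adj hvS haS hbS hbw hab).1

theorem KConnected.exchange_or_delete [Fintype V] (hF : KConnected 2 F)
    (huv : F.Adj u v) (huw : F.Adj u w) (hut : F.Adj u t)
    (hvw : v ≠ w) (htv : t ≠ v) (htw : t ≠ w) :
    KConnected 2 (F.deleteEdges {s(u, v)} ⊔ SimpleGraph.edge v w) ∨
      KConnected 2 (F.deleteEdges {s(u, w)}) := by
  simp only [kConnected_two_iff_forall_not_isSeparation] at hF ⊢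
  obtain ⟨hV, hF⟩ := hF
  by_contra! h
  obtain ⟨x, S, hS⟩ := h.1 hV
  obtain ⟨y, T, hT⟩ := h.2 hV
  obtain ⟨S, hS, huS, hvS, hvx⟩ := exists_isSeparation_of_deleteEdges_le hF le_sup_left hS
  obtain ⟨T, hT, huT, hwT, hwy⟩ := exists_isSeparation_of_deleteEdges_le hF le_rfl hT
  -- The detour `u - w - v` survives the exchange, so only `w` can separate `u` from `v`.
  have hxw : x = w := by
    by_cases hwS : w ∈ S
    · have hwv : (F.deleteEdges {s(u, v)} ⊔ SimpleGraph.edge v w).Adj w v := by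
        simp [SimpleGraph.edge_adj, hvw.symm]
      exact absurd (hS.eq_of_adj hwS hvS hwv) hvx
    · have huw' : (F.deleteEdges {s(u, v)} ⊔ SimpleGraph.edge v w).Adj u w := by
        simp [huw, huv.ne, hvw.symm]
      exact (hS.eq_of_adj huS hwS huw').symm
  subst hxw
  obtain ⟨A, hA⟩ := exists_isSeparation_of_isSeparation_deleteEdges huv hut huw.ne hvw htv htw
    (hS.anti le_sup_left) huS hvS hT huT hwT hwy
  exact hF u A hA

end Separation

section Optimization

variable {V M : Type*} [Fintype V] [AddCommMonoid M]

/-- The total weight of the edges of `F`, the quantity minimized among the 2-connected spanning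
subgraphs of a graph. -/
def totalWeight (weight : Sym2 V → M) (F : SimpleGraph V) : M :=
  ∑ e ∈ F.edgeFinset, weight e

variable {G F : SimpleGraph V} {weight : Sym2 V → M}

lemma totalWeight_deleteEdges_add {e : Sym2 V} (he : e ∈ F.edgeSet) :
    totalWeight weight (F.deleteEdges {e}) + weight e = totalWeight weight F := by
  rw [totalWeight, totalWeight, ← Finset.sum_erase_add _ _ (SimpleGraph.mem_edgeFinset.2 he)]
  exact congrArg (· + weight e) (Finset.sum_congr (by ext; simp [and_comm]) fun _ _ => rfl)

lemma totalWeight_sup_edge_le [PartialOrder M] [IsOrderedAddMonoid M] {a b : V}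
    (hweight : 0 ≤ weight s(a, b)) :
    totalWeight weight (F ⊔ SimpleGraph.edge a b) ≤ totalWeight weight F + weight s(a, b) := by
  by_cases hab : a = b ∨ F.Adj a b
  · rw [sup_eq_left.2 (F.edge_le_iff.2 hab)]
    exact le_add_of_nonneg_right hweight
  · rw [not_or] at hab
    rw [totalWeight, totalWeight, add_comm, ← Finset.sum_cons (F.mem_edgeFinset.not.2 hab.2)]
    exact (Finset.sum_congr (by ext; simp [SimpleGraph.edgeSet_edge_of_ne hab.1, or_comm])
      fun _ _ => rfl).le

theorem exists_kConnected_two_degree_le [LinearOrder M] [IsOrderedCancelAddMonoid M] {k : ℕ}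
    (hk : 2 ≤ k) (hG : KConnected 2 G)
    (hweight : ∀ e ∈ G.edgeSet, 0 < weight e)
    (hswap : ∀ (u : V) (N : Finset V), (∀ v ∈ N, G.Adj u v) → k < N.card →
      ∃ v ∈ N, ∃ w ∈ N, G.Adj v w ∧ weight s(v, w) < weight s(u, v)) :
    ∃ F ≤ G, KConnected 2 F ∧ ∀ v, F.degree v ≤ k := by
  obtain ⟨F, ⟨hFG, hF⟩, hmin⟩ := Set.exists_min_image {F | F ≤ G ∧ KConnected 2 F}
    (totalWeight weight) (Set.toFinite _) ⟨G, le_rfl, hG⟩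
  refine ⟨F, hFG, hF, fun u => ?_⟩
  by_contra! hdeg
  rw [← SimpleGraph.card_neighborFinset_eq_degree] at hdeg
  obtain ⟨v, hv, w, hw, hvw, hlt⟩ := hswap u (F.neighborFinset u)
    (fun v hv => hFG ((F.mem_neighborFinset u v).1 hv)) hdeg
  obtain ⟨t, ht, htvw⟩ := Finset.exists_mem_notMem_of_card_lt_card
    ((Finset.card_le_two (a := v) (b := w)).trans_lt (hk.trans_lt hdeg))
  rw [Finset.mem_insert, Finset.mem_singleton, not_or] at htvw
  rw [SimpleGraph.mem_neighborFinset] at hv hw ht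
  rcases hF.exchange_or_delete hv hw ht hvw.ne htvw.1 htvw.2 with hF' | hF'
  · refine (hmin _ ⟨sup_le ((F.deleteEdges_le _).trans hFG)
      (G.edge_le_iff.2 (.inr hvw)), hF'⟩).not_gt ?_
    calc totalWeight weight (F.deleteEdges {s(u, v)} ⊔ SimpleGraph.edge v w)
        ≤ totalWeight weight (F.deleteEdges {s(u, v)}) + weight s(v, w) :=
          totalWeight_sup_edge_le (hweight _ hvw).le
      _ < totalWeight weight (F.deleteEdges {s(u, v)}) + weight s(u, v) := by gcongr
      _ = totalWeight weight F := totalWeight_deleteEdges_add hv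
  · refine (hmin _ ⟨(F.deleteEdges_le _).trans hFG, hF'⟩).not_gt ?_
    rw [← totalWeight_deleteEdges_add (weight := weight) (F.mem_edgeSet.2 hw)]
    exact lt_add_of_pos_right _ (hweight _ (hFG hw))

end Optimization

section PlanarWeight

variable {V : Type*}

/-- The weight of an edge of a graph drawn in the plane by `p`: its length, with ties broken
lexicographically by the sum of the first coordinates of its ends. -/
def lexWeight (p : V → Pt) : Sym2 V → ℝ ×ₗ ℝ :=
  Sym2.lift ⟨fun a b => toLex (dist (p a) (p b), p a 0 + p b 0),
    fun a b => by simp only [dist_comm, add_comm]⟩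

variable {p : V → Pt}

lemma lexWeight_lt_iff {a b c d : V} :
    lexWeight p s(a, b) < lexWeight p s(c, d) ↔ dist (p a) (p b) < dist (p c) (p d) ∨
      dist (p a) (p b) = dist (p c) (p d) ∧ p a 0 + p b 0 < p c 0 + p d 0 :=
  Prod.Lex.toLex_lt_toLex

lemma lexWeight_pos {G : SimpleGraph V} {e : Sym2 V} (hp : Function.Injective p)
    (he : e ∈ G.edgeSet) : 0 < lexWeight p e := by
  induction e with
  | _ a b => exact Prod.Lex.toLex_lt_toLex.2 (.inl (dist_pos.2 (hp.ne (SimpleGraph.Adj.ne he))))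

lemma exists_lexWeight_lt {N : Finset V} {u : V} (hp : Function.Injective p) (hu : u ∉ N)
    (hcard : 5 < N.card) :
    ∃ v ∈ N, ∃ w ∈ N, v ≠ w ∧ lexWeight p s(v, w) < lexWeight p s(u, v) := by
  have hmain := exists_dist_lt_or_eq_of_five_lt_card (N := N.image p) (x := p u)
    (by rwa [Finset.card_image_of_injective N hp]) (by simpa [hp.eq_iff] using hu)
  simpa only [Finset.exists_mem_image, hp.ne_iff, lexWeight_lt_iff, add_comm (p u 0),
    add_lt_add_iff_left] using hmain

end PlanarWeight

theorem exists_two_connected_spanning_degree_le_five_general {V : Type*} [Fintype V]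
    (G : SimpleGraph V) (p : V → Pt) (hp : Function.Injective p)
    (hadj : ∀ u v w, G.Adj u v → v ≠ w → dist (p v) (p w) ≤ dist (p u) (p v) → G.Adj v w)
    (hG : KConnected 2 G) :
    ∃ F : SimpleGraph V, F ≤ G ∧ KConnected 2 F ∧ ∀ v, F.degree v ≤ 5 := by
  refine exists_kConnected_two_degree_le (weight := lexWeight p) (by norm_num) hG
    (fun _ => lexWeight_pos hp) fun u N hN hcard => ?_
  have hu : u ∉ N := fun hu => G.irrefl (hN u hu)
  obtain ⟨v, hv, w, hw, hvw, hlt⟩ := exists_lexWeight_lt hp hu hcard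
  have hdist : dist (p v) (p w) ≤ dist (p u) (p v) :=
    (lexWeight_lt_iff.1 hlt).elim le_of_lt fun h => h.1.le
  exact ⟨v, hv, w, hw, hadj u v w (hN v hv) hvw hdist, hlt⟩

/-- Every 2-connected unit disk graph `G` has a 2-connected spanning subgraph
in which every vertex has degree at most 5. -/
theorem exists_two_connected_spanning_degree_le_five {V : Type*} [Fintype V]
    (G : SimpleGraph V) (p : V → Pt) (hudg : IsUnitDiskGraph G p)
    (hG : KConnected 2 G) :
    ∃ F : SimpleGraph V, F ≤ G ∧ KConnected 2 F ∧ ∀ v, F.degree v ≤ 5 :=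
  exists_two_connected_spanning_degree_le_five_general G p hudg.1
    (fun u v w huv hvw hle => (hudg.2 v w).2 ⟨hvw, hle.trans ((hudg.2 u v).1 huv).2⟩) hG
end
end

section
/- Let G be a 2-connected unit disk graph and F a minimum-length 2-connected spanning subgraph of G. If a vertex u has degree exactly 6 in F, then each neighbor of u has degree at most 4 in F. -/
open scoped Classical
open EuclideanGeometry Real

noncomputable section

/-!
By minimality no edge `uv` of `F` can be deleted. Hence, if `deg u > 2`, any two neighbors of `u`
other than `v` stay connected in `F - u - v`: a pair that did not would provide a detour for `uv`
around every vertex, and `uv` could be deleted. It follows that for distinct neighbors `v`, `w` of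
`u` the exchange `F - uw + vw` is again 2-connected, so minimality gives `|uw| ≤ |vw|`. In the
triangle `vuw` the side `vw` is therefore longest, its opposite angle at `u` is at least `π / 3`,
and `deg u ≤ 6` everywhere. If `deg u = 6`, then each neighbor `v` makes an angle of exactly
`π / 3` with two other neighbors `a` and `b`, and the triangles `uva`, `uvb` are equilateral. The
exchanges of `ua` for `va` and `ub` for `vb` preserve the length, so they lead to another minimum
in which `v` has degree `deg v + 2`, which is at most `6`.
-/

/-! ### Planar packing of directions -/

section Separated

variable {ι : Type*} {s : Finset ι} {f : ι → ℝ} {a b δ : ℝ}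

lemma exists_add_card_sub_one_mul_le_of_separated (hs : s.Nonempty) (hδ : 0 < δ)
    (ha : ∀ i ∈ s, a ≤ f i) (hsep : (s : Set ι).Pairwise fun i j => δ ≤ |f i - f j|) :
    ∃ i ∈ s, a + (s.card - 1) * δ ≤ f i := by
  by_contra! hlt
  let cell (i : ι) : ℤ := ⌊(f i - a) / δ⌋
  have hmaps : Set.MapsTo cell s (Finset.Ico (0 : ℤ) (s.card - 1)) := by
    intro i hi
    have hcell : (f i - a) / δ < s.card - 1 := by
      rw [div_lt_iff₀ hδ]
      linarith [hlt i hi]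
    rw [Finset.coe_Ico, Set.mem_Ico, Int.le_floor, Int.floor_lt]
    push_cast
    exact ⟨div_nonneg (sub_nonneg.2 (ha i hi)) hδ.le, hcell⟩
  have hcard : (Finset.Ico (0 : ℤ) (s.card - 1)).card < s.card := by
    have := hs.card_pos
    rw [Int.card_Ico]
    omega
  obtain ⟨i, hi, j, hj, hij, hcell⟩ :=
    Finset.exists_ne_map_eq_of_card_lt_of_maps_to hcard hmaps
  have hclose := Int.abs_sub_lt_one_of_floor_eq_floor hcell
  rw [← sub_div, sub_sub_sub_cancel_right, abs_div, abs_of_pos hδ, div_lt_one hδ] at hclose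
  exact (hsep hi hj hij).not_gt hclose

lemma exists_le_sub_card_sub_one_mul_of_separated (hs : s.Nonempty) (hδ : 0 < δ)
    (hb : ∀ i ∈ s, f i ≤ b) (hsep : (s : Set ι).Pairwise fun i j => δ ≤ |f i - f j|) :
    ∃ i ∈ s, f i ≤ b - (s.card - 1) * δ := by
  obtain ⟨i, hi, hle⟩ := exists_add_card_sub_one_mul_le_of_separated (f := -f) (a := -b) hs hδ
    (fun i hi => neg_le_neg (hb i hi)) fun i hi j hj hij => by
      simpa only [Pi.neg_apply, neg_sub_neg, abs_sub_comm] using hsep hi hj hij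
  exact ⟨i, hi, by rw [Pi.neg_apply] at hle; linarith⟩

end Separated

lemma eq_or_eq_two_pi_sub_of_cos_eq {s t : ℝ} (hs : s ∈ Set.Icc 0 (2 * π))
    (ht : t ∈ Set.Icc 0 π) (h : cos s = cos t) : s = t ∨ s = 2 * π - t := by
  rcases le_total s π with hsπ | hsπ
  · exact .inl (injOn_cos ⟨hs.1, hsπ⟩ ht h)
  · have : 2 * π - s = t :=
      injOn_cos ⟨by linarith [hs.2], by linarith⟩ ht (by rw [cos_two_pi_sub, h])
    exact .inr (by linarith)

section Plane

variable {E P : Type*} [NormedAddCommGroup E] [InnerProductSpace ℝ E]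
  [MetricSpace P] [NormedAddTorsor E P]

lemma exists_polar_angle [Fact (Module.finrank ℝ E = 2)] {c q : P} (hq : q ≠ c) :
    ∃ φ : P → ℝ, φ q = 0 ∧ (∀ x, φ x ∈ Set.Ico 0 (2 * π)) ∧
      ∀ x y, x ≠ c → y ≠ c → |φ x - φ y| = ∠ x c y ∨ |φ x - φ y| = 2 * π - ∠ x c y := by
  have : FiniteDimensional ℝ E := .of_fact_finrank_eq_two
  let o : Orientation ℝ E (Fin 2) := (Module.finBasisOfFinrankEq ℝ E Fact.out).orientation
  let φ (x : P) : ℝ := toIcoMod two_pi_pos 0 (o.oangle (q -ᵥ c) (x -ᵥ c)).toReal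
  have hφ (x : P) : φ x ∈ Set.Ico 0 (2 * π) := by
    simpa only [zero_add] using toIcoMod_mem_Ico two_pi_pos 0 _
  have hφ_coe (x : P) : (φ x : Real.Angle) = o.oangle (q -ᵥ c) (x -ᵥ c) := by
    rw [Real.Angle.coe_toIcoMod, Real.Angle.coe_toReal]
  refine ⟨φ, ?_, hφ, fun x y hx hy => eq_or_eq_two_pi_sub_of_cos_eq ?_ ?_ ?_⟩
  · simp only [φ, o.oangle_self, Real.Angle.toReal_zero, toIcoMod_apply_left]
  · have hx2π := hφ x
    have hy2π := hφ y
    exact ⟨abs_nonneg _, abs_le.2 ⟨by linarith [hx2π.1, hy2π.2], by linarith [hx2π.2, hy2π.1]⟩⟩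
  · exact ⟨EuclideanGeometry.angle_nonneg _ _ _, EuclideanGeometry.angle_le_pi _ _ _⟩
  · rw [cos_abs, ← Real.Angle.cos_coe, Real.Angle.coe_sub, hφ_coe, hφ_coe,
      o.oangle_sub_left (vsub_ne_zero.2 hq) (vsub_ne_zero.2 hy) (vsub_ne_zero.2 hx),
      o.cos_oangle_eq_cos_angle (vsub_ne_zero.2 hy) (vsub_ne_zero.2 hx), EuclideanGeometry.angle,
      InnerProductGeometry.angle_comm]

section Packing

variable [Fact (Module.finrank ℝ E = 2)] {ι : Type*} {s : Finset ι} {q : ι → P} {c : P} {i : ι}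
  {δ : ℝ}

lemma exists_separated_polar_angle (hq : ∀ j ∈ s, q j ≠ c)
    (hsep : (s : Set ι).Pairwise fun j k => δ ≤ ∠ (q j) c (q k)) (hi : i ∈ s) :
    ∃ φ : ι → ℝ, (∀ j ∈ s.erase i, δ ≤ φ j ∧ φ j ≤ 2 * π - δ) ∧
      ((s.erase i : Finset ι) : Set ι).Pairwise (fun j k => δ ≤ |φ j - φ k|) ∧
      ∀ j ∈ s.erase i, φ j = ∠ (q j) c (q i) ∨ φ j = 2 * π - ∠ (q j) c (q i) := by
  obtain ⟨φ, hφi, hφ, hφ_sub⟩ := exists_polar_angle (hq i hi)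
  have hangle : ∀ j ∈ s.erase i,
      φ (q j) = ∠ (q j) c (q i) ∨ φ (q j) = 2 * π - ∠ (q j) c (q i) := fun j hj => by
    simpa only [hφi, sub_zero, abs_of_nonneg (hφ (q j)).1] using
      hφ_sub (q j) (q i) (hq j (Finset.mem_of_mem_erase hj)) (hq i hi)
  have hpi (j k : ι) : ∠ (q j) c (q k) ≤ π := EuclideanGeometry.angle_le_pi _ _ _
  refine ⟨φ ∘ q, fun j hj => ?_, fun j hj k hk hjk => ?_, hangle⟩
  · obtain ⟨hji, hjs⟩ := Finset.mem_erase.1 hj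
    have := hsep hjs hi hji
    rcases hangle j hj with h | h <;> constructor <;> rw [Function.comp_apply, h] <;>
      linarith [hpi j i]
  · have hjs := Finset.mem_of_mem_erase hj
    have hks := Finset.mem_of_mem_erase hk
    have := hsep hjs hks hjk
    change δ ≤ |φ (q j) - φ (q k)|
    rcases hφ_sub (q j) (q k) (hq j hjs) (hq k hks) with h | h <;> rw [h] <;> linarith [hpi j k]

lemma card_mul_le_two_pi_of_separated_angle (hq : ∀ j ∈ s, q j ≠ c) (hδ : 0 < δ)
    (hδ_le : δ ≤ 2 * π) (hsep : (s : Set ι).Pairwise fun j k => δ ≤ ∠ (q j) c (q k)) :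
    s.card * δ ≤ 2 * π := by
  rcases s.eq_empty_or_nonempty with rfl | ⟨i, hi⟩
  · simp [pi_nonneg]
  obtain ⟨φ, hφ, hφ_sep, -⟩ := exists_separated_polar_angle hq hsep hi
  have hcard : ((s.erase i).card : ℝ) = s.card - 1 := by
    rw [Finset.cast_card_erase_of_mem hi]
  rcases (s.erase i).eq_empty_or_nonempty with hempty | hne
  · rw [hempty, Finset.card_empty, Nat.cast_zero] at hcard
    nlinarith
  · obtain ⟨j, hj, hle⟩ :=
      exists_add_card_sub_one_mul_le_of_separated hne hδ (fun j hj => (hφ j hj).1) hφ_sep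
    rw [hcard] at hle
    linarith [(hφ j hj).2]

lemma exists_angle_eq_of_card_mul_eq_two_pi (hq : ∀ j ∈ s, q j ≠ c) (hδ : 0 < δ) (hδ_lt : δ < π)
    (hsep : (s : Set ι).Pairwise fun j k => δ ≤ ∠ (q j) c (q k)) (hcard : s.card * δ = 2 * π)
    (hi : i ∈ s) :
    ∃ j ∈ s.erase i, ∃ k ∈ s.erase i, j ≠ k ∧ ∠ (q j) c (q i) = δ ∧ ∠ (q k) c (q i) = δ := by
  obtain ⟨φ, hφ, hφ_sep, hangle⟩ := exists_separated_polar_angle hq hsep hi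
  have hcard_erase : ((s.erase i).card : ℝ) * δ = 2 * π - δ := by
    rw [Finset.cast_card_erase_of_mem hi, sub_one_mul, hcard]
  have hne : (s.erase i).Nonempty := by
    rw [← Finset.card_pos, ← Nat.cast_pos (α := ℝ)]
    exact pos_of_mul_pos_left (by linarith) hδ.le
  obtain ⟨j, hj, hφj⟩ := exists_le_sub_card_sub_one_mul_of_separated hne hδ
    (fun j hj => (hφ j hj).2) hφ_sep
  obtain ⟨k, hk, hφk⟩ := exists_add_card_sub_one_mul_le_of_separated hne hδ
    (fun j hj => (hφ j hj).1) hφ_sep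
  rw [sub_one_mul, hcard_erase] at hφj hφk
  have hj_pi : ∠ (q j) c (q i) ≤ π := EuclideanGeometry.angle_le_pi _ _ _
  have hk_pi : ∠ (q k) c (q i) ≤ π := EuclideanGeometry.angle_le_pi _ _ _
  refine ⟨j, hj, k, hk, ?_, ?_, ?_⟩
  · rintro rfl
    linarith
  · rcases hangle j hj with h | h <;> linarith [(hφ j hj).1]
  · rcases hangle k hk with h | h <;> linarith [(hφ k hk).2]

end Packing

section Triangle

variable {c x y : P}

lemma pi_div_three_le_angle_of_dist_le (hx : x ≠ c) (hy : y ≠ c) (hcx : dist c x ≤ dist x y)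
    (hcy : dist c y ≤ dist x y) : π / 3 ≤ ∠ x c y := by
  have hlaw := EuclideanGeometry.law_cos x c y
  rw [dist_comm x c, dist_comm y c] at hlaw
  have hxpos : 0 < dist c x := dist_pos.2 hx.symm
  have hypos : 0 < dist c y := dist_pos.2 hy.symm
  have hcos : cos (∠ x c y) ≤ cos (π / 3) := by
    rw [cos_pi_div_three]
    by_contra! hlt
    have := mul_lt_mul_of_pos_left hlt (mul_pos hxpos hypos)
    rcases le_total (dist c x) (dist c y) <;> nlinarith
  by_contra! hlt
  exact hcos.not_gt (cos_lt_cos_of_nonneg_of_le_pi (EuclideanGeometry.angle_nonneg _ _ _)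
    (by linarith [pi_pos]) hlt)

lemma dist_eq_of_angle_eq_pi_div_three (hcx : dist c x ≤ dist x y)
    (hcy : dist c y ≤ dist x y) (hangle : ∠ x c y = π / 3) :
    dist c x = dist x y := by
  have hlaw := EuclideanGeometry.law_cos x c y
  rw [dist_comm x c, dist_comm y c, hangle, cos_pi_div_three] at hlaw
  have hx : x ≠ c := by
    rintro rfl
    rw [EuclideanGeometry.angle_self_left] at hangle
    linarith [pi_pos]
  have hxpos : 0 < dist c x := dist_pos.2 hx.symm
  have hyx : dist c y ≤ dist c x := by nlinarith
  have hsq : dist x y ^ 2 ≤ dist c x ^ 2 := by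
    nlinarith [mul_nonneg (dist_nonneg (x := c) (y := y)) (sub_nonneg.2 hyx)]
  exact hcx.antisymm ((sq_le_sq₀ dist_nonneg dist_nonneg).1 hsq)

end Triangle

end Plane

/-! ### Two-connectedness and edge exchanges -/

section Reachability

variable {V : Type*} {F : SimpleGraph V} {a b x : V}

lemma exists_adj_and_reachable_deleteIncidenceSet (h : F.Reachable a b) (hab : a ≠ b) :
    ∃ c, F.Adj c b ∧ (F.deleteIncidenceSet b).Reachable a c := by
  by_contra! hcon
  have havoid : ∀ c, F.Reachable a c → c ≠ b ∧ (F.deleteIncidenceSet b).Reachable a c := by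
    intro c hc
    rw [SimpleGraph.reachable_iff_reflTransGen] at hc
    induction hc with
    | refl => exact ⟨hab, .rfl⟩
    | @tail d c _ hdc ih =>
      have hcb : c ≠ b := by
        rintro rfl
        exact hcon d hdc ih.2
      exact ⟨hcb, ih.2.trans (SimpleGraph.deleteIncidenceSet_adj.2 ⟨hdc, ih.1, hcb⟩).reachable⟩
  exact (havoid b h).1 rfl

lemma reachable_deleteIncidenceSet_of_not_reachable (hab : F.Reachable a b)
    (hax : ¬ F.Reachable a x) : (F.deleteIncidenceSet x).Reachable a b := by
  rw [SimpleGraph.reachable_iff_reflTransGen] at hab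
  induction hab with
  | refl => exact .rfl
  | @tail b c hab hbc ih =>
    have hb : F.Reachable a b := (SimpleGraph.reachable_iff_reflTransGen a b).2 hab
    have hbx : b ≠ x := fun h => hax (h ▸ hb)
    have hcx : c ≠ x := fun h => hax (h ▸ hb.trans hbc.reachable)
    exact ih.trans (SimpleGraph.deleteIncidenceSet_adj.2 ⟨hbc, hbx, hcx⟩).reachable

lemma reachable_induce_of_reachable_deleteIncidenceSet {s : Set V} (hs : ∀ v ≠ x, v ∈ s)
    (ha : a ≠ x) (hb : b ≠ x) (h : (F.deleteIncidenceSet x).Reachable a b) :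
    (F.induce s).Reachable ⟨a, hs a ha⟩ ⟨b, hs b hb⟩ := by
  rw [SimpleGraph.reachable_iff_reflTransGen] at h
  induction h with
  | refl => exact .rfl
  | tail _ hbc ih =>
    obtain ⟨hadj, hbx, -⟩ := SimpleGraph.deleteIncidenceSet_adj.1 hbc
    exact (ih hbx).trans (SimpleGraph.Adj.reachable (SimpleGraph.induce_adj.2 hadj))

lemma reachable_deleteIncidenceSet_of_reachable_induce {s : Set V} (hx : x ∉ s) {a b : s}
    (h : (F.induce s).Reachable a b) : (F.deleteIncidenceSet x).Reachable a b := by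
  rw [← F.induce_deleteIncidenceSet_of_notMem hx] at h
  exact h.map (SimpleGraph.Embedding.induce s).toHom

lemma deleteIncidenceSet_mono {H : SimpleGraph V} (h : F ≤ H) (x : V) :
    F.deleteIncidenceSet x ≤ H.deleteIncidenceSet x := fun _ _ hadj => by
  rw [SimpleGraph.deleteIncidenceSet_adj] at hadj ⊢
  exact hadj.imp_left (h ·)

end Reachability

section TwoConnected

variable {V : Type*} [Fintype V] {F H : SimpleGraph V} {u v w y : V}

lemma kConnected_two_iff : KConnected 2 F ↔ 2 < Fintype.card V ∧
    ∀ x a b, a ≠ x → b ≠ x → (F.deleteIncidenceSet x).Reachable a b := by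
  refine and_congr_right fun hcard => ⟨fun h x a b ha hb => ?_, fun h S hS => ?_⟩
  · have hconn := h {x} (by simp)
    exact reachable_deleteIncidenceSet_of_reachable_induce (by simp)
      (hconn.preconnected ⟨a, by simpa using ha⟩ ⟨b, by simpa using hb⟩)
  · have hpre : (F.induce {v : V | v ∉ S}).Preconnected := by
      rintro ⟨a, ha⟩ ⟨b, hb⟩
      obtain ⟨x, hx, hax, hbx⟩ : ∃ x, (∀ v ≠ x, v ∉ S) ∧ a ≠ x ∧ b ≠ x := by
        rcases S.eq_empty_or_nonempty with rfl | ⟨x, hx⟩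
        · obtain ⟨x, hx⟩ := Finset.exists_mem_notMem_of_card_lt_card
            (s := {a, b}) (t := Finset.univ) (Finset.card_le_two.trans_lt hcard)
          simp only [Finset.mem_insert, Finset.mem_singleton, not_or] at hx
          exact ⟨x, fun v _ => Finset.notMem_empty v, Ne.symm hx.2.1, Ne.symm hx.2.2⟩
        · refine ⟨x, fun v hvx hv => hvx ?_, fun h => ha (h ▸ hx), fun h => hb (h ▸ hx)⟩
          exact Finset.card_le_one.1 (Nat.le_of_lt_succ hS) v hv x hx
      exact reachable_induce_of_reachable_deleteIncidenceSet hx hax hbx (h x a b hax hbx)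
    obtain ⟨y, -, hy⟩ := Finset.exists_mem_notMem_of_card_lt_card
      (s := S) (t := Finset.univ) (hS.trans hcard)
    exact SimpleGraph.connected_iff _ |>.2 ⟨hpre, ⟨y, hy⟩⟩

lemma KConnected.of_deleteEdges_le (hF : KConnected 2 F) (hH : F.deleteEdges {s(u, w)} ≤ H)
    (huw : ∀ x, x ≠ u → x ≠ w → (H.deleteIncidenceSet x).Reachable u w) : KConnected 2 H := by
  rw [kConnected_two_iff] at hF ⊢
  refine ⟨hF.1, fun x a b ha hb => ?_⟩
  have hab := hF.2 x a b ha hb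
  rw [SimpleGraph.reachable_iff_reflTransGen] at hab
  clear hb
  induction hab with
  | refl => exact .rfl
  | @tail c d _ hcd ih =>
    obtain ⟨hadj, hcx, hdx⟩ := SimpleGraph.deleteIncidenceSet_adj.1 hcd
    refine ih.trans ?_
    by_cases hedge : s(c, d) = s(u, w)
    · rcases Sym2.eq_iff.1 hedge with ⟨rfl, rfl⟩ | ⟨rfl, rfl⟩
      · exact huw x hcx.symm hdx.symm
      · exact (huw x hdx.symm hcx.symm).symm
    · have hHadj : H.Adj c d := hH (SimpleGraph.deleteEdges_adj.2 ⟨hadj, hedge⟩)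
      exact (SimpleGraph.deleteIncidenceSet_adj.2 ⟨hHadj, hcx, hdx⟩).reachable

/-- A detour from `u` to `v` around `x` leaves `u` through whichever of `w`, `y` does not lie in
the component of `x` in `F - u - v`. -/
lemma KConnected.deleteEdges_of_not_reachable (hF : KConnected 2 F) (huv : u ≠ v)
    (hw : F.Adj u w) (hy : F.Adj u y) (hwv : w ≠ v) (hyv : y ≠ v)
    (hwy : ¬ ((F.deleteIncidenceSet u).deleteIncidenceSet v).Reachable w y) :
    KConnected 2 (F.deleteEdges {s(u, v)}) := by
  refine hF.of_deleteEdges_le le_rfl fun x hxu hxv => ?_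
  have hdetour : ∀ s, F.Adj u s → s ≠ v →
      ¬ ((F.deleteIncidenceSet u).deleteIncidenceSet v).Reachable s x →
      ((F.deleteEdges {s(u, v)}).deleteIncidenceSet x).Reachable u v := by
    intro s hus hsv hsx
    obtain ⟨c, hcv, hsc⟩ := exists_adj_and_reachable_deleteIncidenceSet
      ((kConnected_two_iff.1 hF).2 u s v hus.ne' huv.symm) hsv
    have hcx : c ≠ x := fun h => hsx (h ▸ hsc)
    have hsx' : s ≠ x := fun h => hsx (h ▸ .rfl)
    have hle : (F.deleteIncidenceSet u).deleteIncidenceSet v ≤ F.deleteEdges {s(u, v)} := by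
      intro a b h
      simp only [SimpleGraph.deleteIncidenceSet_adj] at h
      simp [h]
    have hsc' := (reachable_deleteIncidenceSet_of_not_reachable hsc hsx).mono
      (deleteIncidenceSet_mono hle x)
    have hus' : ((F.deleteEdges {s(u, v)}).deleteIncidenceSet x).Adj u s := by
      simp [SimpleGraph.deleteIncidenceSet_adj, hus, hsv, hsx', hxu.symm, huv]
    have hcv' : ((F.deleteEdges {s(u, v)}).deleteIncidenceSet x).Adj c v := by
      rw [SimpleGraph.deleteIncidenceSet_adj] at hcv
      simp [SimpleGraph.deleteIncidenceSet_adj, hcv, hcx, hxv.symm]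
    exact hus'.reachable.trans (hsc'.trans hcv'.reachable)
  by_cases hwx : ((F.deleteIncidenceSet u).deleteIncidenceSet v).Reachable w x
  · exact hdetour y hy hyv fun hyx => hwy (hwx.trans hyx.symm)
  · exact hdetour w hw hwv hwx

lemma KConnected.of_deleteEdges_le_of_adj (hF : KConnected 2 F)
    (hcrit : ¬ KConnected 2 (F.deleteEdges {s(u, v)})) (hu : 2 < F.degree u) (hv : F.Adj u v)
    (hw : F.Adj u w) (hvw : v ≠ w) (hH : F.deleteEdges {s(u, w)} ≤ H) (hHvw : H.Adj v w) :
    KConnected 2 H := by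
  have hHadj {a b : V} (hab : F.Adj a b) (hne : s(a, b) ≠ s(u, w)) : H.Adj a b :=
    hH (SimpleGraph.deleteEdges_adj.2 ⟨hab, hne⟩)
  refine hF.of_deleteEdges_le hH fun x hxu hxw => ?_
  rcases eq_or_ne x v with rfl | hxv
  · obtain ⟨y, hy, hy'⟩ := Finset.exists_mem_notMem_of_card_lt_card
      (s := {x, w}) (t := F.neighborFinset u) (Finset.card_le_two.trans_lt hu)
    simp only [Finset.mem_insert, Finset.mem_singleton, not_or] at hy'
    rw [SimpleGraph.mem_neighborFinset] at hy
    have hwy : ((F.deleteIncidenceSet u).deleteIncidenceSet x).Reachable w y := by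
      by_contra h
      exact hcrit (hF.deleteEdges_of_not_reachable hv.ne hw hy hvw.symm hy'.1 h)
    have hle : (F.deleteIncidenceSet u).deleteIncidenceSet x ≤ H.deleteIncidenceSet x := by
      intro a b h
      simp only [SimpleGraph.deleteIncidenceSet_adj] at h ⊢
      exact ⟨hHadj h.1.1 (by simp [h]), h.2⟩
    have huy : (H.deleteIncidenceSet x).Adj u y := SimpleGraph.deleteIncidenceSet_adj.2
      ⟨hHadj hy (by simp [hy'.2, hw.ne]), hv.ne, hy'.1⟩
    exact huy.reachable.trans (hwy.mono hle).symm
  · have huv : (H.deleteIncidenceSet x).Adj u v := SimpleGraph.deleteIncidenceSet_adj.2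
      ⟨hHadj hv (by simp [hvw, hw.ne]), hxu.symm, hxv.symm⟩
    have hvw' : (H.deleteIncidenceSet x).Adj v w :=
      SimpleGraph.deleteIncidenceSet_adj.2 ⟨hHvw, hxv.symm, hxw.symm⟩
    exact huv.reachable.trans hvw'.reachable

end TwoConnected

/-! ### Minimum-length spanning subgraphs -/

section Exchange

variable {V : Type*} {F G : SimpleGraph V} {p : V → Pt} {u v w x : V}

/-- The exchange `F - uw + vw`, where `v` and `w` are neighbors of `u` in `F`. -/
def exchange (F : SimpleGraph V) (u v w : V) : SimpleGraph V :=
  F.deleteEdges {s(u, w)} ⊔ SimpleGraph.edge v w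

/-- Replacing an end of an edge of `G` by a point at most as far from the other end gives an edge
of `G`. It keeps the exchanges `F - uw + vw` with `|vw| ≤ |uw|` inside `G`; disk
graphs of any common radius and complete graphs on a point set have it. -/
def ShorterEdgeClosed (p : V → Pt) (G : SimpleGraph V) : Prop :=
  ∀ ⦃u v w⦄, G.Adj u w → v ≠ w → dist (p v) (p w) ≤ dist (p u) (p w) → G.Adj v w

lemma IsUnitDiskGraph.shorterEdgeClosed (h : IsUnitDiskGraph G p) : ShorterEdgeClosed p G :=
  fun u v w huw hvw hle => (h.2 v w).2 ⟨hvw, hle.trans ((h.2 u w).1 huw).2⟩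

lemma exchange_adj {a b : V} : (exchange F u v w).Adj a b ↔
    F.Adj a b ∧ s(a, b) ≠ s(u, w) ∨ s(a, b) = s(v, w) ∧ a ≠ b := by
  simp only [exchange, SimpleGraph.sup_adj, SimpleGraph.deleteEdges_adj, Set.mem_singleton_iff,
    SimpleGraph.edge_adj, Sym2.eq_iff, ne_eq]

lemma exchange_adj_of_adj (hux : F.Adj u x) (hxw : x ≠ w) : (exchange F u v w).Adj u x :=
  exchange_adj.2 (.inl ⟨hux, fun h => hxw (Sym2.congr_right.1 h)⟩)

variable [Fintype V]

lemma degree_exchange_add_one (huw : F.Adj u w) (huv : u ≠ v) :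
    (exchange F u v w).degree u + 1 = F.degree u := by
  have h : (exchange F u v w).neighborFinset u = (F.neighborFinset u).erase w := by
    ext x
    simp only [SimpleGraph.mem_neighborFinset, exchange_adj, Finset.mem_erase, Sym2.eq_iff]
    grind [huw.ne]
  rw [← SimpleGraph.card_neighborFinset_eq_degree, h, Finset.card_erase_add_one (by simpa),
    SimpleGraph.card_neighborFinset_eq_degree]

lemma degree_exchange (huv : u ≠ v) (hvw : v ≠ w) (hnadj : ¬ F.Adj v w) :
    (exchange F u v w).degree v = F.degree v + 1 := by
  have h : (exchange F u v w).neighborFinset v = insert w (F.neighborFinset v) := by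
    ext x
    simp only [SimpleGraph.mem_neighborFinset, exchange_adj, Finset.mem_insert, Sym2.eq_iff]
    grind
  rw [← SimpleGraph.card_neighborFinset_eq_degree, h, Finset.card_insert_of_notMem (by simpa),
    SimpleGraph.card_neighborFinset_eq_degree]

lemma glen_eq_sum {s : Finset (Sym2 V)} (hs : (s : Set (Sym2 V)) = F.edgeSet) :
    glen p F = ∑ e ∈ s, edgeLen p e := by
  rw [glen]
  congr 1
  rw [← Finset.coe_inj, SimpleGraph.coe_edgeFinset, hs]

lemma glen_deleteEdges_add_dist (huw : F.Adj u w) :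
    glen p (F.deleteEdges {s(u, w)}) + dist (p u) (p w) = glen p F := by
  rw [glen_eq_sum (s := F.edgeFinset.erase s(u, w)) (by simp)]
  exact Finset.sum_erase_add _ _ (SimpleGraph.mem_edgeFinset.2 huw)

lemma glen_sup_edge (hvw : v ≠ w) (hnadj : ¬ F.Adj v w) :
    glen p (F ⊔ SimpleGraph.edge v w) = glen p F + dist (p v) (p w) := by
  rw [glen_eq_sum (s := insert s(v, w) F.edgeFinset)
    (by simp [SimpleGraph.edgeSet_edge_of_ne hvw]),
    Finset.sum_insert (by simpa), add_comm]
  rfl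

lemma glen_exchange_add_dist (huw : F.Adj u w) (hvw : v ≠ w) (hnadj : ¬ F.Adj v w) :
    glen p (exchange F u v w) + dist (p u) (p w) = glen p F + dist (p v) (p w) := by
  rw [exchange, glen_sup_edge hvw fun h => hnadj (SimpleGraph.deleteEdges_adj.1 h).1,
    ← glen_deleteEdges_add_dist huw, add_right_comm]

end Exchange

namespace IsMSS

variable {V : Type*} [Fintype V] {F G : SimpleGraph V} {p : V → Pt} {u v w : V}

lemma not_kConnected_deleteEdges {k : ℕ} (hF : IsMSS k p G F) (huv : F.Adj u v)
    (hp : p u ≠ p v) : ¬ KConnected k (F.deleteEdges {s(u, v)}) := fun h => by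
  linarith [hF.2.2 _ ((F.deleteEdges_le _).trans hF.1) h, dist_pos.2 hp,
    glen_deleteEdges_add_dist (p := p) huv]

lemma not_adj (hF : IsMSS 2 p G F) (hp : Function.Injective p) (hu : 2 < F.degree u)
    (hv : F.Adj u v) (hw : F.Adj u w) (hvw : v ≠ w) : ¬ F.Adj v w := fun hadj =>
  hF.not_kConnected_deleteEdges hw (hp.ne hw.ne) <|
    hF.2.1.of_deleteEdges_le_of_adj (hF.not_kConnected_deleteEdges hv (hp.ne hv.ne)) hu hv hw hvw
      le_rfl (SimpleGraph.deleteEdges_adj.2 ⟨hadj, by simp [hv.ne', hvw]⟩)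

lemma kConnected_exchange (hF : IsMSS 2 p G F) (hp : Function.Injective p) (hu : 2 < F.degree u)
    (hv : F.Adj u v) (hw : F.Adj u w) (hvw : v ≠ w) : KConnected 2 (exchange F u v w) :=
  hF.2.1.of_deleteEdges_le_of_adj (hF.not_kConnected_deleteEdges hv (hp.ne hv.ne)) hu hv hw hvw
    le_sup_left (exchange_adj.2 (.inr ⟨rfl, hvw⟩))

lemma exchange_le {k : ℕ} (hF : IsMSS k p G F) (hG : ShorterEdgeClosed p G) (hw : F.Adj u w)
    (hvw : v ≠ w) (hdist : dist (p v) (p w) ≤ dist (p u) (p w)) : exchange F u v w ≤ G :=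
  sup_le ((F.deleteEdges_le _).trans hF.1) <|
    (SimpleGraph.edge_le_iff G).2 (.inr (hG (hF.1 hw) hvw hdist))

lemma dist_le (hF : IsMSS 2 p G F) (hp : Function.Injective p) (hG : ShorterEdgeClosed p G)
    (hu : 2 < F.degree u) (hv : F.Adj u v) (hw : F.Adj u w) (hvw : v ≠ w) :
    dist (p u) (p w) ≤ dist (p v) (p w) := by
  by_contra! hlt
  have hmin := hF.2.2 _ (hF.exchange_le hG hw hvw hlt.le) (hF.kConnected_exchange hp hu hv hw hvw)
  linarith [glen_exchange_add_dist (p := p) hw hvw (hF.not_adj hp hu hv hw hvw)]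

lemma exchange_of_dist_eq (hF : IsMSS 2 p G F) (hp : Function.Injective p)
    (hG : ShorterEdgeClosed p G) (hu : 2 < F.degree u) (hv : F.Adj u v) (hw : F.Adj u w)
    (hvw : v ≠ w) (hdist : dist (p u) (p w) = dist (p v) (p w)) :
    IsMSS 2 p G (exchange F u v w) := by
  refine ⟨hF.exchange_le hG hw hvw hdist.ge, hF.kConnected_exchange hp hu hv hw hvw,
    fun H hH hH_conn => ?_⟩
  linarith [hF.2.2 H hH hH_conn,
    glen_exchange_add_dist (p := p) hw hvw (hF.not_adj hp hu hv hw hvw)]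

lemma pi_div_three_le_angle (hF : IsMSS 2 p G F) (hp : Function.Injective p)
    (hG : ShorterEdgeClosed p G) (hu : 2 < F.degree u) (hv : F.Adj u v) (hw : F.Adj u w)
    (hvw : v ≠ w) : π / 3 ≤ ∠ (p v) (p u) (p w) := by
  refine pi_div_three_le_angle_of_dist_le (hp.ne hv.ne') (hp.ne hw.ne') ?_
    (hF.dist_le hp hG hu hv hw hvw)
  rw [dist_comm (p v)]
  exact hF.dist_le hp hG hu hw hv hvw.symm

lemma pairwise_pi_div_three_le_angle (hF : IsMSS 2 p G F) (hp : Function.Injective p)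
    (hG : ShorterEdgeClosed p G) (hu : 2 < F.degree u) :
    (F.neighborFinset u : Set V).Pairwise fun v w => π / 3 ≤ ∠ (p v) (p u) (p w) := by
  rw [SimpleGraph.coe_neighborFinset]
  exact fun v hv w hw hvw => hF.pi_div_three_le_angle hp hG hu hv hw hvw

open scoped EuclideanSpace

lemma degree_le_six (hF : IsMSS 2 p G F) (hp : Function.Injective p)
    (hG : ShorterEdgeClosed p G) (u : V) : F.degree u ≤ 6 := by
  rcases le_or_gt (F.degree u) 2 with hu | hu
  · omega
  have hpack := card_mul_le_two_pi_of_separated_angle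
    (fun v hv => hp.ne ((F.mem_neighborFinset u v).1 hv).ne') (by positivity)
    (by linarith [pi_pos]) (hF.pairwise_pi_div_three_le_angle hp hG hu)
  rw [SimpleGraph.card_neighborFinset_eq_degree] at hpack
  have : (F.degree u : ℝ) ≤ 6 := by nlinarith [pi_pos]
  exact_mod_cast this

lemma exists_two_neighbors_dist_eq (hF : IsMSS 2 p G F) (hp : Function.Injective p)
    (hG : ShorterEdgeClosed p G) (hdeg : F.degree u = 6) (hv : F.Adj u v) :
    ∃ a b, F.Adj u a ∧ F.Adj u b ∧ a ≠ v ∧ b ≠ v ∧ a ≠ b ∧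
      dist (p u) (p a) = dist (p v) (p a) ∧ dist (p u) (p b) = dist (p v) (p b) := by
  have hu : 2 < F.degree u := by omega
  have hdist {a : V} (ha : F.Adj u a) (hav : a ≠ v) (hangle : ∠ (p a) (p u) (p v) = π / 3) :
      dist (p u) (p a) = dist (p v) (p a) := by
    rw [dist_comm (p v)]
    refine dist_eq_of_angle_eq_pi_div_three ?_ (hF.dist_le hp hG hu ha hv hav) hangle
    rw [dist_comm (p a)]
    exact hF.dist_le hp hG hu hv ha hav.symm
  obtain ⟨a, ha, b, hb, hab, hva, hvb⟩ := exists_angle_eq_of_card_mul_eq_two_pi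
    (fun w hw => hp.ne ((F.mem_neighborFinset u w).1 hw).ne') (by positivity)
    (by linarith [pi_pos]) (hF.pairwise_pi_div_three_le_angle hp hG hu)
    (by rw [SimpleGraph.card_neighborFinset_eq_degree, hdeg]; push_cast; ring)
    ((F.mem_neighborFinset u v).2 hv)
  rw [Finset.mem_erase, SimpleGraph.mem_neighborFinset] at ha hb
  exact ⟨a, b, ha.2, hb.2, ha.1, hb.1, hab, hdist ha.2 ha.1 hva, hdist hb.2 hb.1 hvb⟩

end IsMSS

theorem mss2_neighbor_of_degree_six_general {V : Type*} [Fintype V] {G F : SimpleGraph V}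
    {p : V → Pt} (hp : Function.Injective p) (hG : ShorterEdgeClosed p G) (hF : IsMSS 2 p G F)
    {u v : V} (hdeg : F.degree u = 6) (hv : F.Adj u v) : F.degree v ≤ 4 := by
  obtain ⟨a, b, ha, hb, hav, hbv, hab, hdist_a, hdist_b⟩ :=
    hF.exists_two_neighbors_dist_eq hp hG hdeg hv
  have hF₁ : IsMSS 2 p G (exchange F u v a) :=
    hF.exchange_of_dist_eq hp hG (by omega) hv ha hav.symm hdist_a
  have hdeg₁_v : (exchange F u v a).degree v = F.degree v + 1 :=
    degree_exchange hv.ne hav.symm (hF.not_adj hp (by omega) hv ha hav.symm)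
  have hdeg₁_u : (exchange F u v a).degree u + 1 = F.degree u := degree_exchange_add_one ha hv.ne
  have hv₁ : (exchange F u v a).Adj u v := exchange_adj_of_adj hv hav.symm
  have hb₁ : (exchange F u v a).Adj u b := exchange_adj_of_adj hb hab.symm
  have hF₂ : IsMSS 2 p G (exchange (exchange F u v a) u v b) :=
    hF₁.exchange_of_dist_eq hp hG (by omega) hv₁ hb₁ hbv.symm hdist_b
  have hdeg₂_v : (exchange (exchange F u v a) u v b).degree v = (exchange F u v a).degree v + 1 :=
    degree_exchange hv.ne hbv.symm (hF₁.not_adj hp (by omega) hv₁ hb₁ hbv.symm)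
  have := hF₂.degree_le_six hp hG v
  omega

/-- In a minimum-length 2-connected spanning subgraph `F` of a 2-connected unit disk
graph, if a vertex `u` has degree exactly 6 in `F`, then every neighbor of `u`
has degree at most 4 in `F`. -/
theorem mss2_neighbor_of_degree_six {V : Type*} [Fintype V] (G F : SimpleGraph V)
    (p : V → Pt) (hudg : IsUnitDiskGraph G p) (hG : KConnected 2 G)
    (hF : IsMSS 2 p G F) (u : V) (hdeg : F.degree u = 6) :
    ∀ v, F.Adj u v → F.degree v ≤ 4 := by
  intro v hv
  exact mss2_neighbor_of_degree_six_general hudg.1 hudg.shorterEdgeClosed hF hdeg hv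
end
end
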